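/- Let q > 0 be real with q ≠ 1, let s be a positive half-integer, and set η = −(q^{2s} + q^{−2s})⁻¹. Then θ₁² ξ₀⁻² ξ₁⁻² − ξ₀² = q^{4s(s−1)} − q^{4s²}, and for a real number g the cubic equation η²·g³ + η·θ₁·ξ₁⁻¹·(ξ₁⁻¹ + 2ξ₀⁻¹)·g² + (θ₁² ξ₀⁻² ξ₁⁻² − ξ₀²)·g = 0 holds if and only if g = 0, or g = q^{2s(s−2)}(1 − q^{8s}), or g = q^{2s(s−2)}(1 + q^{4s}). -/

import Mathlib

/-!
With `x = q^{2s}` and `A = q^{2s²}` one has `ξ₀ = A`, `ξ₁ = -A / x²`, `θ₁ = -A³ / x³` and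
`η = -x / (x² + 1)`. The cubic then becomes rational in `A`, `x`, `g` and factors as
`η² g (g - (A / x²)(1 - x⁴)) (g - (A / x²)(1 + x²))`, with `η ≠ 0`, so its zeros can be read off.
-/

noncomputable def ρ (t : ℝ) : ℝ := t * (t + 1)

/-- `ξ_k = (−1)^k q^{ρ(2s−k) − 2ρ(s)}` (real powers of `q`). -/
noncomputable def ξ (q s : ℝ) (k : ℕ) : ℝ := (-1 : ℝ) ^ k * q ^ (ρ (2 * s - k) - 2 * ρ s)

/-- `θ_n = (−1)^n q^{ρ(3s−n) − 3ρ(s)}` (real powers of `q`). -/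
noncomputable def θq (q s : ℝ) (n : ℕ) : ℝ := (-1 : ℝ) ^ n * q ^ (ρ (3 * s - n) - 3 * ρ s)

lemma xi_zero_eq (q s : ℝ) : ξ q s 0 = q ^ (2 * s ^ 2) := by
  simp only [ξ, ρ, pow_zero, one_mul]
  congr 1
  push_cast
  ring

lemma xi_one_eq {q : ℝ} (s : ℝ) (hq : 0 < q) :
    ξ q s 1 = -(q ^ (2 * s ^ 2) / (q ^ (2 * s)) ^ 2) := by
  simp only [ξ, ρ, pow_one, neg_one_mul]
  rw [← Real.rpow_mul_natCast hq.le, ← Real.rpow_sub hq]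
  congr 2
  push_cast
  ring

lemma theta_one_eq {q : ℝ} (s : ℝ) (hq : 0 < q) :
    θq q s 1 = -((q ^ (2 * s ^ 2)) ^ 3 / (q ^ (2 * s)) ^ 3) := by
  simp only [θq, ρ, pow_one, neg_one_mul]
  rw [← Real.rpow_mul_natCast hq.le, ← Real.rpow_mul_natCast hq.le, ← Real.rpow_sub hq]
  congr 2
  push_cast
  ring

/-- With `η = −(q^{2s}+q^{−2s})⁻¹`: `θ₁²ξ₀⁻²ξ₁⁻² − ξ₀² = q^{4s(s−1)} − q^{4s²}`,
and the cubic `η²g³ + ηθ₁ξ₁⁻¹(ξ₁⁻¹+2ξ₀⁻¹)g² + (θ₁²ξ₀⁻²ξ₁⁻² − ξ₀²)g = 0` holds iff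
`g = 0`, `g = q^{2s(s−2)}(1−q^{8s})`, or `g = q^{2s(s−2)}(1+q^{4s})`. -/
theorem stmt15 (q s : ℝ) (hq : 0 < q) (hq1 : q ≠ 1)
    (hs : ∃ m : ℕ, 0 < m ∧ (m : ℝ) = 2 * s) :
    let η : ℝ := -(q ^ (2 * s) + q ^ (-(2 * s)))⁻¹
    (θq q s 1 ^ 2 * (ξ q s 0)⁻¹ ^ 2 * (ξ q s 1)⁻¹ ^ 2 - ξ q s 0 ^ 2
      = q ^ (4 * s * (s - 1)) - q ^ (4 * s ^ 2)) ∧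
    ∀ g : ℝ,
      (η ^ 2 * g ^ 3 +
        η * θq q s 1 * (ξ q s 1)⁻¹ * ((ξ q s 1)⁻¹ + 2 * (ξ q s 0)⁻¹) * g ^ 2 +
        (θq q s 1 ^ 2 * (ξ q s 0)⁻¹ ^ 2 * (ξ q s 1)⁻¹ ^ 2 - ξ q s 0 ^ 2) * g = 0) ↔
      (g = 0 ∨ g = q ^ (2 * s * (s - 2)) * (1 - q ^ (8 * s)) ∨
        g = q ^ (2 * s * (s - 2)) * (1 + q ^ (4 * s))) := by
  intro η
  have e1 : q ^ (4 * s * (s - 1)) = (q ^ (2 * s ^ 2)) ^ 2 / (q ^ (2 * s)) ^ 2 := by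
    rw [← Real.rpow_mul_natCast hq.le, ← Real.rpow_mul_natCast hq.le, ← Real.rpow_sub hq]
    congr 1; push_cast; ring
  have e2 : q ^ (4 * s ^ 2) = (q ^ (2 * s ^ 2)) ^ 2 := by
    rw [← Real.rpow_mul_natCast hq.le]
    congr 1; push_cast; ring
  have e3 : q ^ (2 * s * (s - 2)) = q ^ (2 * s ^ 2) / (q ^ (2 * s)) ^ 2 := by
    rw [← Real.rpow_mul_natCast hq.le, ← Real.rpow_sub hq]
    congr 1; push_cast; ring
  have e4 : q ^ (8 * s) = (q ^ (2 * s)) ^ 4 := by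
    rw [← Real.rpow_mul_natCast hq.le]
    congr 1; push_cast; ring
  have e5 : q ^ (4 * s) = (q ^ (2 * s)) ^ 2 := by
    rw [← Real.rpow_mul_natCast hq.le]
    congr 1; push_cast; ring
  have hη : η = -(q ^ (2 * s) / ((q ^ (2 * s)) ^ 2 + 1)) := by
    have hx : 0 < q ^ (2 * s) := Real.rpow_pos_of_pos hq _
    simp only [η]
    rw [Real.rpow_neg hq.le]
    field_simp
  clear_value η
  rw [e1, e2, e3, e4, e5, xi_zero_eq, xi_one_eq s hq, theta_one_eq s hq, hη]
  have hx : 0 < q ^ (2 * s) := Real.rpow_pos_of_pos hq _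
  have hA : 0 < q ^ (2 * s ^ 2) := Real.rpow_pos_of_pos hq _
  generalize q ^ (2 * s) = x at hx
  generalize q ^ (2 * s ^ 2) = A at hA
  have hx2 : x ^ 2 + 1 ≠ 0 := by positivity
  refine ⟨by field_simp, fun g => ?_⟩
  have key : (-(x / (x ^ 2 + 1))) ^ 2 * g ^ 3 +
        -(x / (x ^ 2 + 1)) * -(A ^ 3 / x ^ 3) * (-(A / x ^ 2))⁻¹ *
          ((-(A / x ^ 2))⁻¹ + 2 * A⁻¹) * g ^ 2 +
        ((-(A ^ 3 / x ^ 3)) ^ 2 * A⁻¹ ^ 2 * (-(A / x ^ 2))⁻¹ ^ 2 - A ^ 2) * g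
      = (x / (x ^ 2 + 1)) ^ 2 * (g * ((g - A / x ^ 2 * (1 - x ^ 4)) *
          (g - A / x ^ 2 * (1 + x ^ 2)))) := by
    rw [inv_neg]
    field_simp
    ring
  have hη0 : (x / (x ^ 2 + 1)) ^ 2 ≠ 0 := by positivity
  rw [key, mul_eq_zero, or_iff_right hη0, mul_eq_zero, mul_eq_zero, sub_eq_zero, sub_eq_zero]
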